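/- Let D and E be dominated dcpos. If the lattices Γ(D) and Γ(E) of Scott-closed subsets (ordered by inclusion) are order-isomorphic, then D and E are order-isomorphic. Equivalently, for dominated dcpos D and E the following are equivalent: (1) D ≅ E; (2) Γ(D) ≅ Γ(E); (3) D̂ ≅ Ê. -/

import Mathlib

namespace HoZhao

variable {α : Type*}

/-- A set is Scott-closed if it is a lower set and contains the supremum of each of its
nonempty directed subsets. -/
def ScottClosed [Preorder α] (S : Set α) : Prop :=
  IsLowerSet S ∧ ∀ d : Set α, d ⊆ S → d.Nonempty → DirectedOn (· ≤ ·) d →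
    ∀ a : α, IsLUB d a → a ∈ S

/-- A nonempty set is irreducible if whenever it is covered by two Scott-closed sets it is
contained in one of them. -/
def ScottIrred [Preorder α] (A : Set α) : Prop :=
  A.Nonempty ∧ ∀ B C : Set α, ScottClosed B → ScottClosed C → A ⊆ B ∪ C → A ⊆ B ∨ A ⊆ C

/-- A dcpo: every nonempty directed subset has a supremum. -/
def IsDcpo (α : Type*) [Preorder α] : Prop :=
  ∀ d : Set α, d.Nonempty → DirectedOn (· ≤ ·) d → ∃ a : α, IsLUB d a

/-- The order sobrification: the poset of Scott-closed irreducible subsets, ordered by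
inclusion. -/
abbrev OrderSob (α : Type*) [Preorder α] :=
  {A : Set α // ScottClosed A ∧ ScottIrred A}

/-- x' ≺ x : for every closed irreducible set A with x ≤ sup A, one has x' ∈ A. -/
def Prec [Preorder α] (x' x : α) : Prop :=
  ∀ A : Set α, ScottClosed A → ScottIrred A → ∀ a : α, IsLUB A a → x ≤ a → x' ∈ A

/-- A' ◁ A : A' is contained in ↓x for some x ∈ A. -/
def Tri [Preorder α] (A' A : OrderSob α) : Prop :=
  ∃ x ∈ (A : Set α), (A' : Set α) ⊆ {y : α | y ≤ x}

/-- ∇A = the collection of all A' ◁ A. -/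
def Nabla [Preorder α] (A : OrderSob α) : Set (OrderSob α) := {A' | Tri A' A}

/-- A dcpo is dominated if ∇A is Scott-closed in the order sobrification, for every A. -/
def Dominated (α : Type*) [Preorder α] : Prop :=
  ∀ A : OrderSob α, ScottClosed (Nabla A)

/-!
The map `x ↦ ↓x` embeds `D` into `D̂`, and its image can be recognised from the order of `D̂`
alone: for dominated `D` it consists of the `A` with `A ≺ A`. Indeed the supremum of a closed
irreducible `F ⊆ D̂` is the union `⋃ F`, so `A' ◁ A` always implies `A' ≺ A`. Conversely `∇A` is
irreducible with supremum `A`; when it is closed, testing `A' ≺ A` against it gives `A' ◁ A`.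
Hence `A ≺ A` forces `A = ↓x` for some `x`. Finally `D̂` is recovered from `Γ(D)` as its set of
sup-prime elements.
-/

open Set Topology

section ScottClosed

variable {β : Type*} [Preorder α] [Preorder β] {A B C : Set α} {f : α → β}

theorem scottClosed_iff_isClosed : ScottClosed A ↔ IsClosed (X := WithScott α) A :=
  (IsScott.isClosed_iff_isLowerSet_and_dirSupClosed (α := WithScott α)).symm

theorem scottIrred_iff_isIrreducible : ScottIrred A ↔ IsIrreducible (X := WithScott α) A :=
  and_congr_right fun _ => by
    simp only [scottClosed_iff_isClosed]
    exact (isPreirreducible_iff_isClosed_union_isClosed (X := WithScott α)).symm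

theorem scottClosed_empty : ScottClosed (∅ : Set α) :=
  scottClosed_iff_isClosed.2 isClosed_empty

theorem ScottClosed.union (hB : ScottClosed B) (hC : ScottClosed C) : ScottClosed (B ∪ C) :=
  scottClosed_iff_isClosed.2
    ((scottClosed_iff_isClosed.1 hB).union (scottClosed_iff_isClosed.1 hC))

theorem scottClosed_Iic (x : α) : ScottClosed (Iic x) :=
  scottClosed_iff_isClosed.2 (isClosed_Iic (α := WithScott α))

theorem ScottClosed.preimage (hf : ScottContinuous f) {S : Set β} (hS : ScottClosed S) :
    ScottClosed (f ⁻¹' S) :=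
  scottClosed_iff_isClosed.2 <| (scottClosed_iff_isClosed.1 hS).preimage <|
    (IsScott.scottContinuousOn_iff_continuous (α := WithScott α) (β := WithScott β)
      (D := univ) fun _ _ _ => mem_univ _).1 hf.scottContinuousOn

theorem ScottIrred.lowerClosure (hA : ScottIrred A) : ScottIrred (lowerClosure A : Set α) :=
  ⟨hA.1.mono subset_lowerClosure, fun B C hB hC h =>
    (hA.2 B C hB hC (subset_lowerClosure.trans h)).imp
      (lowerClosure_min · hB.1) (lowerClosure_min · hC.1)⟩

theorem scottIrred_singleton (x : α) : ScottIrred {x} :=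
  scottIrred_iff_isIrreducible.2 (isIrreducible_singleton (X := WithScott α))

theorem scottIrred_Iic (x : α) : ScottIrred (Iic x) := by
  simpa using (scottIrred_singleton x).lowerClosure

theorem ScottIrred.image (hA : ScottIrred A) (hf : ScottContinuous f) : ScottIrred (f '' A) := by
  refine ⟨hA.1.image f, fun B C hB hC h => ?_⟩
  simp only [image_subset_iff, preimage_union] at h ⊢
  exact hA.2 _ _ (hB.preimage hf) (hC.preimage hf) h

theorem scottIrred_sUnion_of_directedOn {𝒜 : Set (Set α)} (hne : 𝒜.Nonempty)
    (hdir : DirectedOn (· ⊆ ·) 𝒜) (hirr : ∀ A ∈ 𝒜, ScottIrred A) : ScottIrred (⋃₀ 𝒜) := by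
  obtain ⟨A, hA⟩ := hne
  refine ⟨(hirr A hA).1.mono (subset_sUnion_of_mem hA), fun B C hB hC hBC => ?_⟩
  by_contra! ⟨hnB, hnC⟩
  simp only [sUnion_subset_iff, not_forall] at hnB hnC
  obtain ⟨X, hX, hXB⟩ := hnB
  obtain ⟨Y, hY, hYC⟩ := hnC
  obtain ⟨Z, hZ, hXZ, hYZ⟩ := hdir X hX Y hY
  rcases (hirr Z hZ).2 B C hB hC ((subset_sUnion_of_mem hZ).trans hBC) with hZB | hZC
  · exact hXB (hXZ.trans hZB)
  · exact hYC (hYZ.trans hZC)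

end ScottClosed

section OrderSob

variable [Preorder α]

/-- The Scott closure of an irreducible set, as a point of the order sobrification. -/
def ScottIrred.closure {A : Set α} (hA : ScottIrred A) : OrderSob α :=
  ⟨_root_.closure (X := WithScott α) A, scottClosed_iff_isClosed.2 isClosed_closure,
    scottIrred_iff_isIrreducible.2
      (isIrreducible_iff_closure.2 (scottIrred_iff_isIrreducible.1 hA))⟩

theorem ScottIrred.closure_subset_iff {A B : Set α} (hA : ScottIrred A) (hB : ScottClosed B) :
    (hA.closure : Set α) ⊆ B ↔ A ⊆ B :=
  (scottClosed_iff_isClosed.1 hB).closure_subset_iff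

/-- The principal ideal `↓x` as a point of the order sobrification; this is the canonical
embedding of a poset into its order sobrification. -/
def principal (x : α) : OrderSob α := ⟨Iic x, scottClosed_Iic x, scottIrred_Iic x⟩

theorem principal_le_iff {x : α} {A : OrderSob α} : principal x ≤ A ↔ x ∈ (A : Set α) :=
  ⟨fun h => h (mem_Iic.2 le_rfl), fun hx _ hy => A.2.1.1 hy hx⟩

theorem scottContinuous_principal : ScottContinuous (principal : α → OrderSob α) := by
  refine fun d hne hdir a ha => ⟨?_, fun U hU => ?_⟩
  · rintro _ ⟨x, hx, rfl⟩
    exact principal_le_iff.2 (ha.1 hx)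
  · have hdU : d ⊆ U := fun x hx => principal_le_iff.1 (hU (mem_image_of_mem _ hx))
    exact principal_le_iff.2 (U.2.1.2 d hdU hne hdir a ha)

theorem scottClosed_setOf_coe_subset {B : Set α} (hB : ScottClosed B) :
    ScottClosed {A : OrderSob α | (A : Set α) ⊆ B} := by
  refine ⟨fun _ _ hle hsub => Subset.trans hle hsub, fun d hdB hne hdir a ha => ?_⟩
  have hirr : ScottIrred (⋃₀ (Subtype.val '' d)) :=
    scottIrred_sUnion_of_directedOn (hne.image _) (directedOn_image.2 hdir)
      (forall_mem_image.2 fun A _ => A.2.2)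
  have ha_le : a ≤ hirr.closure := ha.2 fun A hA =>
    (subset_sUnion_of_mem (mem_image_of_mem _ hA)).trans
      ((hirr.closure_subset_iff hirr.closure.2.1).1 Subset.rfl)
  exact Subset.trans ha_le
    ((hirr.closure_subset_iff hB).2 (sUnion_subset (forall_mem_image.2 hdB)))

theorem ScottIrred.biUnion_coe {F : Set (OrderSob α)} (hF : ScottIrred F) :
    ScottIrred (⋃ A ∈ F, (A : Set α)) := by
  obtain ⟨A, hA⟩ := hF.1
  refine ⟨A.2.2.1.mono (subset_biUnion_of_mem hA), fun B C hB hC hBC => ?_⟩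
  simp only [iUnion₂_subset_iff]
  exact hF.2 _ _ (scottClosed_setOf_coe_subset hB) (scottClosed_setOf_coe_subset hC)
    fun A hA => A.2.2.2 B C hB hC ((subset_biUnion_of_mem hA).trans hBC)

theorem biUnion_coe_eq_preimage_principal {F : Set (OrderSob α)} (hF : IsLowerSet F) :
    ⋃ A ∈ F, (A : Set α) = principal ⁻¹' F := by
  ext x
  simp only [mem_iUnion₂, mem_preimage]
  exact ⟨fun ⟨A, hA, hx⟩ => hF (principal_le_iff.2 hx) hA,
    fun hx => ⟨principal x, hx, mem_Iic.2 le_rfl⟩⟩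

theorem subset_biUnion_coe_of_isLUB {F : Set (OrderSob α)} (hF : ScottClosed F)
    (hirr : ScottIrred F) {A : OrderSob α} (hA : IsLUB F A) :
    (A : Set α) ⊆ ⋃ A' ∈ F, (A' : Set α) := by
  have hclosed : ScottClosed (⋃ A' ∈ F, (A' : Set α)) := by
    rw [biUnion_coe_eq_preimage_principal hF.1]
    exact hF.preimage scottContinuous_principal
  have hle : A ≤ (⟨_, hclosed, hirr.biUnion_coe⟩ : OrderSob α) :=
    hA.2 fun A' hA' => subset_biUnion_of_mem hA'
  exact hle

end OrderSob

section Prec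

variable [Preorder α] {A A' : OrderSob α}

theorem tri_iff : Tri A' A ↔ ∃ x ∈ (A : Set α), A' ≤ principal x := Iff.rfl

theorem tri_principal_self (x : α) : Tri (principal x) (principal x) :=
  ⟨x, mem_Iic.2 le_rfl, Subset.rfl⟩

theorem Tri.prec (h : Tri A' A) : Prec A' A := by
  obtain ⟨x, hxA, hA'x⟩ := tri_iff.1 h
  intro F hF hirr U hU hAU
  have hx : x ∈ ⋃ V ∈ F, (V : Set α) := subset_biUnion_coe_of_isLUB hF hirr hU (hAU hxA)
  rw [biUnion_coe_eq_preimage_principal hF.1] at hx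
  exact hF.1 hA'x hx

theorem nabla_eq_lowerClosure (A : OrderSob α) :
    Nabla A = lowerClosure (principal '' (A : Set α)) := by
  ext A'
  simp only [SetLike.mem_coe, mem_lowerClosure, exists_mem_image]
  exact tri_iff

theorem scottIrred_nabla (A : OrderSob α) : ScottIrred (Nabla A) := by
  rw [nabla_eq_lowerClosure]
  exact (A.2.2.image scottContinuous_principal).lowerClosure

theorem isLUB_nabla (A : OrderSob α) : IsLUB (Nabla A) A := by
  rw [nabla_eq_lowerClosure]
  refine ⟨?_, fun U hU x hx => ?_⟩
  · rw [upperBounds_lowerClosure]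
    exact forall_mem_image.2 fun x hx => principal_le_iff.2 hx
  · exact principal_le_iff.1 (hU (subset_lowerClosure (mem_image_of_mem _ hx)))

theorem Prec.tri (hA : ScottClosed (Nabla A)) (h : Prec A' A) : Tri A' A :=
  h (Nabla A) hA (scottIrred_nabla A) A (isLUB_nabla A) le_rfl

end Prec

theorem prec_self_iff_mem_range_principal [PartialOrder α] {A : OrderSob α}
    (hA : ScottClosed (Nabla A)) : Prec A A ↔ A ∈ range principal := by
  refine ⟨fun h => ?_, ?_⟩
  · obtain ⟨x, hxA, hAx⟩ := tri_iff.1 (h.tri hA)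
    exact ⟨x, le_antisymm (principal_le_iff.2 hxA) hAx⟩
  · rintro ⟨x, rfl⟩
    exact (tri_principal_self x).prec

/-- A dominated poset is recovered from its order sobrification as the set of those `A` with
`A ≺ A`. -/
noncomputable def principalOrderIso [PartialOrder α] (hd : Dominated α) :
    α ≃o {A : OrderSob α // Prec A A} :=
  RelIso.ofSurjective
    (OrderEmbedding.ofMapLEIff
      (fun x => (⟨principal x, (tri_principal_self x).prec⟩ : {A : OrderSob α // Prec A A}))
      fun _ _ => principal_le_iff)
    fun ⟨A, hA⟩ =>
      ((prec_self_iff_mem_range_principal (hd A)).1 hA).imp fun _ hx => Subtype.ext hx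

section OrderIso

variable {β : Type*}

/-- The restriction of an order isomorphism to subtypes that correspond under it. -/
def subtypeOrderIso [LE α] [LE β] (e : α ≃o β) {p : α → Prop} {q : β → Prop}
    (h : ∀ a, p a ↔ q (e a)) : {a // p a} ≃o {b // q b} where
  toEquiv := e.toEquiv.subtypeEquiv h
  map_rel_iff' := e.le_iff_le

section Preorder

variable [Preorder α] [Preorder β] (e : α ≃o β)

theorem scottContinuous_orderIso : ScottContinuous e :=
  fun _ _ _ _ ha => e.isLUB_image'.2 ha

theorem scottClosed_image_orderIso_iff {S : Set α} : ScottClosed (e '' S) ↔ ScottClosed S := by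
  refine ⟨fun h => ?_, fun h => ?_⟩
  · simpa [preimage_image_eq _ e.injective] using h.preimage (scottContinuous_orderIso e)
  · rw [e.image_eq_preimage_symm]
    exact h.preimage (scottContinuous_orderIso e.symm)

/-- The isomorphism of lattices of Scott-closed sets induced by an order isomorphism. -/
def scottClosedCongr : {S : Set α // ScottClosed S} ≃o {S : Set β // ScottClosed S} :=
  subtypeOrderIso e.toEquiv.toOrderIsoSet fun _ => (scottClosed_image_orderIso_iff e).symm

variable {e} in
theorem Prec.map {x x' : α} (h : Prec x' x) : Prec (e x') (e x) := by
  intro A hA hirr a ha hxa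
  have hmem : x' ∈ e.symm '' A :=
    h _ ((scottClosed_image_orderIso_iff e.symm).2 hA)
      (hirr.image (scottContinuous_orderIso e.symm)) (e.symm a) (e.symm.isLUB_image'.2 ha)
      (e.le_symm_apply.2 hxa)
  rwa [e.symm.image_eq_preimage_symm] at hmem

theorem prec_orderIso_iff {x x' : α} : Prec (e x') (e x) ↔ Prec x' x :=
  ⟨fun h => by simpa using h.map (e := e.symm), Prec.map⟩

end Preorder

theorem supPrime_orderIso_iff [SemilatticeSup α] [SemilatticeSup β] (e : α ≃o β) {a : α} :
    SupPrime (e a) ↔ SupPrime a := by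
  simp only [SupPrime, e.isMin_apply, e.surjective.forall, ← map_sup, e.le_iff_le]

end OrderIso

section SupPrime

local instance [Preorder α] : SemilatticeSup {S : Set α // ScottClosed S} :=
  Subtype.semilatticeSup fun _ _ => ScottClosed.union

theorem supPrime_iff_scottIrred [Preorder α] {S : {S : Set α // ScottClosed S}} :
    SupPrime S ↔ ScottIrred (S : Set α) := by
  have isMin_iff : IsMin S ↔ (S : Set α) = ∅ := by
    refine ⟨fun h => ?_, fun h T _ => ?_⟩
    · exact subset_empty_iff.1 (h (show ⟨∅, scottClosed_empty⟩ ≤ S from empty_subset _))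
    · exact h.subset.trans (empty_subset _)
  refine and_congr (isMin_iff.not.trans nonempty_iff_ne_empty.symm) ?_
  simp only [Subtype.forall]
  exact ⟨fun h B C hB hC => @h B hB C hC, fun h B hB C hC => h B C hB hC⟩

/-- The order sobrification, as the set of sup-prime elements of the lattice of Scott-closed
sets. -/
def orderSobOrderIsoSupPrime (α : Type*) [Preorder α] :
    OrderSob α ≃o {S : {S : Set α // ScottClosed S} // SupPrime S} where
  toFun A := ⟨⟨A, A.2.1⟩, supPrime_iff_scottIrred.2 A.2.2⟩
  invFun S := ⟨S, S.1.2, supPrime_iff_scottIrred.1 S.2⟩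
  left_inv _ := rfl
  right_inv _ := rfl
  map_rel_iff' := Iff.rfl

/-- The isomorphism of order sobrifications induced by one of the lattices of Scott-closed
sets. -/
def orderSobCongr {β : Type*} [Preorder α] [Preorder β]
    (e : {S : Set α // ScottClosed S} ≃o {S : Set β // ScottClosed S}) :
    OrderSob α ≃o OrderSob β :=
  ((orderSobOrderIsoSupPrime α).trans
    (subtypeOrderIso e fun _ => (supPrime_orderIso_iff e).symm)).trans
    (orderSobOrderIsoSupPrime β).symm

end SupPrime

/-- The isomorphism of dominated posets induced by one of their order sobrifications. -/
noncomputable def orderIsoOfOrderSob {β : Type*} [PartialOrder α] [PartialOrder β]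
    (hda : Dominated α) (hdb : Dominated β) (e : OrderSob α ≃o OrderSob β) : α ≃o β :=
  ((principalOrderIso hda).trans
    (subtypeOrderIso e fun _ => (prec_orderIso_iff e).symm)).trans (principalOrderIso hdb).symm

theorem dominated_gamma_faithful_general {β : Type*} [PartialOrder α] [PartialOrder β]
    (hda : Dominated α) (hdb : Dominated β) :
    (Nonempty ({S : Set α // ScottClosed S} ≃o {S : Set β // ScottClosed S}) →
      Nonempty (α ≃o β)) ∧
    List.TFAE [Nonempty (α ≃o β),
      Nonempty ({S : Set α // ScottClosed S} ≃o {S : Set β // ScottClosed S}),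
      Nonempty (OrderSob α ≃o OrderSob β)] := by
  refine ⟨fun ⟨e⟩ => ⟨orderIsoOfOrderSob hda hdb (orderSobCongr e)⟩, ?_⟩
  tfae_have 1 → 2 := fun ⟨e⟩ => ⟨scottClosedCongr e⟩
  tfae_have 2 → 3 := fun ⟨e⟩ => ⟨orderSobCongr e⟩
  tfae_have 3 → 1 := fun ⟨e⟩ => ⟨orderIsoOfOrderSob hda hdb e⟩
  tfae_finish

/-- For dominated dcpos D and E, Γ(D) ≅ Γ(E) implies D ≅ E; indeed
D ≅ E, Γ(D) ≅ Γ(E) and D̂ ≅ Ê are all equivalent. -/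
theorem dominated_gamma_faithful {β : Type*} [PartialOrder α] [PartialOrder β]
    (hα : IsDcpo α) (hβ : IsDcpo β) (hda : Dominated α) (hdb : Dominated β) :
    (Nonempty ({S : Set α // ScottClosed S} ≃o {S : Set β // ScottClosed S}) →
      Nonempty (α ≃o β)) ∧
    List.TFAE [Nonempty (α ≃o β),
      Nonempty ({S : Set α // ScottClosed S} ≃o {S : Set β // ScottClosed S}),
      Nonempty (OrderSob α ≃o OrderSob β)] :=
  dominated_gamma_faithful_general hda hdb

end HoZhao
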